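/- Lower bound for the free diastole (Corollary 6.5): Let (X,σ) be a δ-hyperbolic GCB-space which is P0-packed at scale r0 and let Γ be a non-elementary, discrete group of σ-isometries of X. Suppose ε0 > 0 is such that nilrad(Γ,x) ≥ ε0 for every x ∈ X (such an ε0, depending only on P0 and r0, exists by the generalized Margulis lemma). Then the free diastole satisfies dias⁰(Γ,X) = sup_{x∈X} sys⁰(Γ,x) ≥ ε0; more precisely, for every r with 0 < r ≤ ε0 there exists a point x ∈ X such that d(x, g x) ≥ r for every infinite-order element g ∈ Γ. -/

import Mathlib

open Metric Filter

/-- Four-points condition for `δ`-hyperbolicity. -/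
def IsDeltaHyperbolic (X : Type*) [MetricSpace X] (δ : ℝ) : Prop :=
  ∀ x y z w : X,
    dist x y + dist z w ≤ max (dist x z + dist y w) (dist x w + dist y z) + 2 * δ

/-- `X` is `P₀`-packed at scale `r₀`: any subset of a closed ball of radius `3r₀` whose
points are pairwise at distance `> 2r₀` has cardinality at most `P₀`. -/
def IsPacked (X : Type*) [MetricSpace X] (P₀ r₀ : ℝ) : Prop :=
  ∀ x : X, ∀ S : Finset X, (↑S ⊆ closedBall x (3 * r₀)) →
    (∀ a ∈ S, ∀ b ∈ S, a ≠ b → 2 * r₀ < dist a b) → (S.card : ℝ) ≤ P₀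

/-- A geodesically complete, convex, consistent, reversible geodesic bicombing on `X`.
Together with completeness of `X` this is the notion of GCB-space. -/
structure IsGCB {X : Type*} [MetricSpace X] (σ : X → X → ℝ → X) : Prop where
  source : ∀ x y : X, σ x y 0 = x
  target : ∀ x y : X, σ x y 1 = y
  geodesic : ∀ x y : X, ∀ t ∈ Set.Icc (0:ℝ) 1, ∀ t' ∈ Set.Icc (0:ℝ) 1,
    dist (σ x y t) (σ x y t') = |t - t'| * dist x y
  convex : ∀ x y x' y' : X,
    ConvexOn ℝ (Set.Icc (0:ℝ) 1) fun t => dist (σ x y t) (σ x' y' t)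
  consistent : ∀ x y : X, ∀ s t l : ℝ, 0 ≤ s → s ≤ t → t ≤ 1 → l ∈ Set.Icc (0:ℝ) 1 →
    σ (σ x y s) (σ x y t) l = σ x y ((1 - l) * s + l * t)
  reversible : ∀ x y : X, ∀ t ∈ Set.Icc (0:ℝ) 1, σ x y t = σ y x (1 - t)
  geodComplete : ∀ x y : X, ∃ γ : ℝ → X, Isometry γ ∧
    (∀ s t : ℝ, s ≤ t → ∀ l ∈ Set.Icc (0:ℝ) 1, σ (γ s) (γ t) l = γ (s + l * (t - s))) ∧
    (∀ t ∈ Set.Icc (0:ℝ) 1, σ x y t = γ (t * dist x y))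

/-- `g` is a `σ`-isometry: a surjective isometry preserving the bicombing `σ`. -/
def IsSigmaIsometry {X : Type*} [MetricSpace X] (σ : X → X → ℝ → X) (g : X ≃ᵢ X) : Prop :=
  ∀ x y : X, ∀ t ∈ Set.Icc (0:ℝ) 1, g (σ x y t) = σ (g x) (g y) t

/-- A group of isometries is discrete if for every `x` and `R` only finitely many of its
elements displace `x` at most `R`. -/
def IsDiscreteSubgroup {X : Type*} [MetricSpace X] (Γ : Subgroup (X ≃ᵢ X)) : Prop :=
  ∀ x : X, ∀ R : ℝ, {g : X ≃ᵢ X | g ∈ Γ ∧ dist x (g x) ≤ R}.Finite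

/-- A group is virtually nilpotent if it has a nilpotent subgroup of finite index. -/
def IsVirtuallyNilpotent (G : Type*) [Group G] : Prop :=
  ∃ H : Subgroup G, H.FiniteIndex ∧ Group.IsNilpotent H

/-- `Γ` is non-elementary: it contains two elements generating a subgroup that is not
virtually nilpotent. -/
def IsNonElementary {X : Type*} [MetricSpace X] (Γ : Subgroup (X ≃ᵢ X)) : Prop :=
  ∃ a b : X ≃ᵢ X, a ∈ Γ ∧ b ∈ Γ ∧
    ¬ IsVirtuallyNilpotent ↥(Subgroup.closure ({a, b} : Set (X ≃ᵢ X)))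

/-- An isometry is non-elliptic if its orbits are unbounded. -/
def IsNonElliptic {X : Type*} [MetricSpace X] (g : X ≃ᵢ X) : Prop :=
  ∀ x : X, ¬ Bornology.IsBounded (Set.range fun n : ℤ => (g ^ n) x)

/-- The `r`-almost stabilizer `Γ_r(x)`, generated by the elements of `Γ` displacing `x`
at most `r`. -/
def almostStabilizer {X : Type*} [MetricSpace X] (Γ : Subgroup (X ≃ᵢ X)) (r : ℝ) (x : X) :
    Subgroup (X ≃ᵢ X) :=
  Subgroup.closure {g : X ≃ᵢ X | g ∈ Γ ∧ dist x (g x) ≤ r}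

/-- The nilpotence radius of `Γ` at `x`. -/
noncomputable def nilrad {X : Type*} [MetricSpace X] (Γ : Subgroup (X ≃ᵢ X)) (x : X) : ℝ :=
  sSup {r : ℝ | 0 ≤ r ∧ IsVirtuallyNilpotent ↥(almostStabilizer Γ r x)}

/-- The Margulis domain `M_ε(g)`. -/
def margulisDomain {X : Type*} [MetricSpace X] (g : X ≃ᵢ X) (ε : ℝ) : Set X :=
  {x : X | dist x (g x) ≤ ε}

/-- The generalized Margulis domain `ℳ_ε(g) = ⋃_{i ≠ 0} M_ε(gⁱ)`. -/
def genMargulisDomain {X : Type*} [MetricSpace X] (g : X ≃ᵢ X) (ε : ℝ) : Set X :=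
  ⋃ i ∈ {i : ℤ | i ≠ 0}, margulisDomain (g ^ i) ε

/-- `f` parameterizes a geodesic segment from `x` to `y` on `[0, dist x y]`. -/
def IsGeodesicFrom {X : Type*} [MetricSpace X] (f : ℝ → X) (x y : X) : Prop :=
  f 0 = x ∧ f (dist x y) = y ∧
    ∀ s ∈ Set.Icc 0 (dist x y), ∀ t ∈ Set.Icc 0 (dist x y), dist (f s) (f t) = |s - t|

/-- `X` is a geodesic space. -/
def IsGeodesicSpace (X : Type*) [MetricSpace X] : Prop :=
  ∀ x y : X, ∃ f : ℝ → X, IsGeodesicFrom f x y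

/-- `C` is `lam`-quasiconvex: any two of its points are joined by a geodesic contained in
the closed `lam`-neighbourhood of `C`. -/
def IsQuasiconvex {X : Type*} [MetricSpace X] (lam : ℝ) (C : Set X) : Prop :=
  ∀ x ∈ C, ∀ y ∈ C, ∃ f : ℝ → X, IsGeodesicFrom f x y ∧
    ∀ t ∈ Set.Icc 0 (dist x y), infDist (f t) C ≤ lam

/-- `C` is a convex subset: any two of its points are joined by a geodesic inside `C`. -/
def IsConvexSubset {X : Type*} [MetricSpace X] (C : Set X) : Prop :=
  ∀ x ∈ C, ∀ y ∈ C, ∃ f : ℝ → X, IsGeodesicFrom f x y ∧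
    ∀ t ∈ Set.Icc 0 (dist x y), f t ∈ C

/-- Arc-length concatenation of three paths, of respective lengths `d₁`, `d₂` and the rest. -/
noncomputable def concatPath {X : Type*} (d₁ d₂ : ℝ) (f₁ f₂ f₃ : ℝ → X) : ℝ → X :=
  fun t => if t ≤ d₁ then f₁ t else if t ≤ d₁ + d₂ then f₂ (t - d₁) else f₃ (t - d₁ - d₂)

/-! Suppose that every point `x` is displaced by less than `ε` by some element of infinite order.
Such an element escapes to infinity, and its fixed set on the Gromov boundary consists of the one
or two limit points of its orbits; this set is finite and does not change when passing to powers.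
Two short elements at the same point generate a virtually nilpotent group, so that suitable powers
of them generate a nilpotent group, and this forces their fixed sets to coincide. As `X` is
connected, all short elements then share one fixed set, which is invariant under `Γ`.

If it is a single point `ξ`, move along a ray pointing away from `ξ`. Isometries that fix `ξ` and
displace a far point of the ray by less than `ε` displace the origin of the ray by a bounded
amount, so by discreteness one short element works all along the ray and therefore fixes its
end, a second boundary point. If it consists of two points, the orbit of a short element `g` is a
coarse geodesic between them and each element of `Γ` coarsely preserves this orbit, so that `⟨g⟩`
has finite index in `Γ`. Both are impossible. -/

section VirtuallyNilpotent

variable {G : Type*} [Group G]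

theorem IsVirtuallyNilpotent.of_isNilpotent [Group.IsNilpotent G] : IsVirtuallyNilpotent G :=
  ⟨⊤, inferInstance, inferInstance⟩

theorem IsVirtuallyNilpotent.of_isEmpty {X : Type*} [MetricSpace X] [IsEmpty X]
    (Γ : Subgroup (X ≃ᵢ X)) : IsVirtuallyNilpotent Γ :=
  have : Subsingleton (X ≃ᵢ X) := ⟨fun _ _ => IsometryEquiv.ext fun x => isEmptyElim x⟩
  .of_isNilpotent

theorem IsVirtuallyNilpotent.of_injective {H : Type*} [Group H] (hG : IsVirtuallyNilpotent G)
    (f : H →* G) (hf : Function.Injective f) : IsVirtuallyNilpotent H := by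
  obtain ⟨N, _, _⟩ := hG
  have hindex : (N.comap f).index ≠ 0 := by
    rw [Subgroup.index_comap]
    exact (N.subgroupOf f.range).index_ne_zero_of_finite
  refine ⟨N.comap f, ⟨hindex⟩, ?_⟩
  have hinj : Function.Injective (f.subgroupComap N) := fun a b hab =>
    Subtype.ext (hf (congrArg Subtype.val hab))
  exact Subgroup.isNilpotent_of_ker_le_center _
    (((MonoidHom.ker_eq_bot_iff _).2 hinj).trans_le bot_le)

theorem IsNonElementary.not_isVirtuallyNilpotent {X : Type*} [MetricSpace X]
    {Γ : Subgroup (X ≃ᵢ X)} (hΓ : IsNonElementary Γ) : ¬ IsVirtuallyNilpotent Γ := by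
  obtain ⟨a, b, ha, hb, hab⟩ := hΓ
  have hle : Subgroup.closure {a, b} ≤ Γ := by
    rw [Subgroup.closure_le]
    exact Set.pair_subset ha hb
  exact fun hV => hab (hV.of_injective (Subgroup.inclusion hle) (Subgroup.inclusion_injective hle))

-- If `y ≡ g` modulo the `k`-th term of the lower central series, then `y g y⁻¹ ≡ g` modulo
-- the next term.
theorem exists_iterate_conj_eq [Group.IsNilpotent G] (g h : G) :
    ∃ n : ℕ, (fun y => y * g * y⁻¹)^[n] h = g := by
  obtain ⟨n, hn⟩ := Subgroup.nilpotent_iff_lowerCentralSeries.1 ‹Group.IsNilpotent G›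
  have hmem : ∀ k : ℕ, (fun y => y * g * y⁻¹)^[k] h * g⁻¹ ∈
      (⊤ : Subgroup G).lowerCentralSeries k := by
    intro k
    induction k with
    | zero => simp
    | succ k ih =>
      rw [Function.iterate_succ_apply', Subgroup.lowerCentralSeries_succ]
      convert Subgroup.commutator_mem_commutator ih (Subgroup.mem_top g) using 1
      rw [commutatorElement_def]
      group
  exact ⟨n, by simpa only [hn, Subgroup.mem_bot, mul_inv_eq_one] using hmem n⟩

end VirtuallyNilpotent

section RigidFixedSet

open MulAction
open scoped Pointwise

variable {G B : Type*} [Group G] [MulAction G B]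

/-- The fixed set of `g` is finite and is not enlarged by passing to a power of `g`. Both
hyperbolic and parabolic isometries act in this way on a Gromov boundary. -/
structure HasRigidFixedSet (B : Type*) {G : Type*} [Group G] [MulAction G B] (g : G) : Prop where
  finite : (fixedBy B g).Finite
  fixedBy_pow : ∀ m : ℕ, 0 < m → fixedBy B (g ^ m) = fixedBy B g

namespace HasRigidFixedSet

variable {g h : G}

theorem pow (hg : HasRigidFixedSet B g) {m : ℕ} (hm : 0 < m) : HasRigidFixedSet B (g ^ m) where
  finite := (hg.fixedBy_pow m hm).symm ▸ hg.finite
  fixedBy_pow k hk := by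
    rw [← pow_mul, hg.fixedBy_pow _ (Nat.mul_pos hm hk), hg.fixedBy_pow m hm]

theorem conj (hg : HasRigidFixedSet B g) (u : G) : HasRigidFixedSet B (u * g * u⁻¹) where
  finite := by
    rw [← smul_fixedBy]
    exact hg.finite.smul_set
  fixedBy_pow m hm := by
    rw [conj_pow, ← smul_fixedBy, ← smul_fixedBy, hg.fixedBy_pow m hm]

theorem of_coe {H : Subgroup G} {g : H} (hg : HasRigidFixedSet B (g : G)) :
    HasRigidFixedSet B g :=
  ⟨hg.finite, hg.fixedBy_pow⟩

theorem subset_fixedBy_of_subset_smul (hg : HasRigidFixedSet B g) {s : Set B} (hs : s.Finite)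
    (hsg : s ⊆ g • s) : s ⊆ fixedBy B g := by
  intro ξ hξ
  have hmem : ∀ n : ℕ, (g⁻¹ ^ n) • ξ ∈ s := by
    intro n
    induction n with
    | zero => simpa using hξ
    | succ n ih =>
      rw [pow_succ', mul_smul, ← Set.mem_smul_set_iff_inv_smul_mem]
      exact hsg ih
  obtain ⟨i, j, hij, heq⟩ := hs.exists_lt_map_eq_of_forall_mem hmem
  rw [← hg.fixedBy_pow (j - i) (Nat.sub_pos_of_lt hij), mem_fixedBy]
  rw [← Nat.add_sub_cancel' hij.le, pow_add, mul_smul, smul_left_cancel_iff, inv_pow] at heq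
  exact eq_inv_smul_iff.1 heq

-- Follow `h`, `h g h⁻¹`, … to `g` by `exists_iterate_conj_eq`. If `fixedBy g` is fixed by
-- `h g h⁻¹`, then it is contained in `fixedBy (h g h⁻¹) = h • fixedBy g`, and so it is fixed by
-- `h` by finiteness.
theorem fixedBy_subset_of_isNilpotent [Group.IsNilpotent G] (hg : HasRigidFixedSet B g)
    (hh : HasRigidFixedSet B h) : fixedBy B g ⊆ fixedBy B h := by
  obtain ⟨n, hn⟩ := exists_iterate_conj_eq g h
  induction n generalizing h with
  | zero => rw [← hn, Function.iterate_zero_apply]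
  | succ n ih =>
    have hconj : fixedBy B g ⊆ fixedBy B (h * g * h⁻¹) := ih (hg.conj h) hn
    exact hh.subset_fixedBy_of_subset_smul hg.finite (by rwa [smul_fixedBy])

theorem fixedBy_eq_of_isVirtuallyNilpotent (hg : HasRigidFixedSet B g)
    (hh : HasRigidFixedSet B h) {V : Subgroup G} (hV : IsVirtuallyNilpotent V) (hgV : g ∈ V)
    (hhV : h ∈ V) : fixedBy B g = fixedBy B h := by
  obtain ⟨N, hN, _⟩ := hV
  obtain ⟨k, hk, -, hgk⟩ := Subgroup.exists_pow_mem_of_index_ne_zero hN.index_ne_zero ⟨g, hgV⟩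
  obtain ⟨l, hl, -, hhl⟩ := Subgroup.exists_pow_mem_of_index_ne_zero hN.index_ne_zero ⟨h, hhV⟩
  have hgN : HasRigidFixedSet B (⟨⟨g, hgV⟩ ^ k, hgk⟩ : N) := (hg.pow hk).of_coe.of_coe
  have hhN : HasRigidFixedSet B (⟨⟨h, hhV⟩ ^ l, hhl⟩ : N) := (hh.pow hl).of_coe.of_coe
  rw [← hg.fixedBy_pow k hk, ← hh.fixedBy_pow l hl]
  exact (hgN.fixedBy_subset_of_isNilpotent hhN).antisymm (hhN.fixedBy_subset_of_isNilpotent hgN)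

end HasRigidFixedSet

end RigidFixedSet

section GromovProduct

variable {X : Type*} [MetricSpace X]

/-- The Gromov product of `x` and `y` based at `o`. -/
noncomputable def gromovProd (o x y : X) : ℝ := (dist o x + dist o y - dist x y) / 2

theorem gromovProd_comm (o x y : X) : gromovProd o x y = gromovProd o y x := by
  unfold gromovProd
  rw [dist_comm x y, add_comm (dist o x)]

theorem gromovProd_nonneg (o x y : X) : 0 ≤ gromovProd o x y := by
  unfold gromovProd
  linarith [dist_triangle_left x y o]

theorem gromovProd_add_gromovProd (o x y : X) :
    gromovProd o x y + gromovProd x o y = dist o x := by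
  unfold gromovProd
  rw [dist_comm x o]
  ring

theorem gromovProd_map (g : X ≃ᵢ X) (o x y : X) :
    gromovProd (g o) (g x) (g y) = gromovProd o x y := by
  simp only [gromovProd, g.dist_eq]

theorem gromovProd_le_add_dist_base (o o' x y : X) :
    gromovProd o x y ≤ gromovProd o' x y + dist o o' := by
  unfold gromovProd
  linarith [dist_triangle o o' x, dist_triangle o o' y]

theorem gromovProd_le_add_dist_left (o x x' y : X) :
    gromovProd o x y ≤ gromovProd o x' y + dist x x' := by
  unfold gromovProd
  linarith [dist_triangle_right o x x', dist_triangle_left x' y x]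

theorem gromovProd_le_add_dist_right (o x y y' : X) :
    gromovProd o x y ≤ gromovProd o x y' + dist y y' := by
  simpa only [gromovProd_comm o x] using gromovProd_le_add_dist_left o y y' x

namespace IsDeltaHyperbolic

variable {δ R : ℝ}

theorem nonneg (hX : IsDeltaHyperbolic X δ) (o : X) : 0 ≤ δ := by
  simpa using hX o o o o

theorem dist_add_dist_le_or (hX : IsDeltaHyperbolic X δ) (x y z w : X) :
    dist x y + dist z w ≤ dist x z + dist y w + 2 * δ ∨
      dist x y + dist z w ≤ dist x w + dist y z + 2 * δ := by
  rw [← le_max_iff, max_add_add_right]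
  exact hX x y z w

theorem sub_le_gromovProd (hX : IsDeltaHyperbolic X δ) {o x y z : X}
    (hxy : R ≤ gromovProd o x y) (hyz : R ≤ gromovProd o y z) : R - δ ≤ gromovProd o x z := by
  unfold gromovProd at *
  rcases hX.dist_add_dist_le_or x z y o with h | h <;>
    linarith [dist_comm x o, dist_comm y o, dist_comm z o, dist_comm z y]

theorem sub_two_mul_le_gromovProd (hX : IsDeltaHyperbolic X δ) {o x y z w : X}
    (hxy : R ≤ gromovProd o x y) (hyz : R ≤ gromovProd o y z) (hzw : R ≤ gromovProd o z w) :
    R - 2 * δ ≤ gromovProd o x w := by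
  have hxz := hX.sub_le_gromovProd hxy hyz
  have hxw := hX.sub_le_gromovProd hxz (by linarith [hX.nonneg o])
  linarith

end IsDeltaHyperbolic

end GromovProduct

section AsymptoticSequences

variable {X : Type*} [MetricSpace X]

/-- Two sequences are asymptotic if their mutual Gromov products tend to infinity. A sequence
converges to a point of the Gromov boundary if it is asymptotic to itself. -/
def AsymptoticSeq (o : X) (x y : ℕ → X) : Prop :=
  Tendsto (fun p : ℕ × ℕ => gromovProd o (x p.1) (y p.2)) atTop atTop

theorem asymptoticSeq_iff {o : X} {x y : ℕ → X} :
    AsymptoticSeq o x y ↔ ∀ R, ∃ N, ∀ i ≥ N, ∀ j ≥ N, R ≤ gromovProd o (x i) (y j) := by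
  simp only [AsymptoticSeq, Filter.tendsto_atTop, eventually_atTop_prod_self']

theorem asymptoticSeq_self_of_min_le {o : X} {x : ℕ → X} {f : ℕ → ℝ} (hf : Tendsto f atTop atTop)
    (hfx : ∀ i j, i ≤ j → min (f i) (f j) ≤ gromovProd o (x i) (x j)) :
    AsymptoticSeq o x x := by
  refine asymptoticSeq_iff.2 fun R => ?_
  obtain ⟨N, hN⟩ := (Filter.tendsto_atTop.1 hf R).exists_forall_of_atTop
  refine ⟨N, fun i hi j hj => (le_min (hN i hi) (hN j hj)).trans ?_⟩
  rcases le_total i j with hij | hji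
  · exact hfx i j hij
  · rw [min_comm, gromovProd_comm]
    exact hfx j i hji

namespace AsymptoticSeq

variable {δ : ℝ} {o : X} {x x' y y' z : ℕ → X}

theorem symm (h : AsymptoticSeq o x y) : AsymptoticSeq o y x := by
  have hswap : Tendsto Prod.swap (atTop : Filter (ℕ × ℕ)) atTop := by
    simpa only [← prod_atTop_atTop_eq] using tendsto_prod_swap
  exact (h.comp hswap).congr fun _ => gromovProd_comm o _ _

theorem trans (hX : IsDeltaHyperbolic X δ) (hxy : AsymptoticSeq o x y)
    (hyz : AsymptoticSeq o y z) : AsymptoticSeq o x z := by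
  refine asymptoticSeq_iff.2 fun R => ?_
  obtain ⟨N, hN⟩ := asymptoticSeq_iff.1 hxy (R + δ)
  obtain ⟨M, hM⟩ := asymptoticSeq_iff.1 hyz (R + δ)
  refine ⟨max N M, fun i hi j hj => ?_⟩
  have := hX.sub_le_gromovProd (hN i (le_of_max_le_left hi) (max N M) (le_max_left _ _))
    (hM _ (le_max_right _ _) j (le_of_max_le_right hj))
  linarith

theorem change_base (h : AsymptoticSeq o x y) (o' : X) : AsymptoticSeq o' x y :=
  .atTop_of_add_const (dist o o')
    (tendsto_atTop_mono (fun _ => gromovProd_le_add_dist_base o o' _ _) h)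

theorem map (h : AsymptoticSeq o x y) (g : X ≃ᵢ X) :
    AsymptoticSeq o (fun n => g (x n)) (fun n => g (y n)) := by
  have hg : AsymptoticSeq (g o) (fun n => g (x n)) (fun n => g (y n)) := by
    simpa only [AsymptoticSeq, gromovProd_map] using h
  exact hg.change_base o

theorem of_dist_le (h : AsymptoticSeq o x y) {C : ℝ} (hC : ∀ n, dist (y n) (z n) ≤ C) :
    AsymptoticSeq o x z :=
  .atTop_of_add_const C (tendsto_atTop_mono (fun p =>
    (gromovProd_le_add_dist_right o (x p.1) (y p.2) (z p.2)).trans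
      (by gcongr; exact hC p.2)) h)

theorem comp_right (h : AsymptoticSeq o x y) {φ : ℕ → ℕ} (hφ : Tendsto φ atTop atTop) :
    AsymptoticSeq o x (fun n => y (φ n)) := by
  have hprod : Tendsto (fun p : ℕ × ℕ => (p.1, φ p.2)) atTop atTop :=
    tendsto_id.prod_atTop hφ
  simpa only [AsymptoticSeq, Function.comp_def] using Tendsto.comp h hprod

theorem eventually_le (h : AsymptoticSeq o x y) (R : ℝ) :
    ∀ᶠ n in atTop, R ≤ gromovProd o (x n) (y n) :=
  Filter.tendsto_atTop.1 (Tendsto.comp h tendsto_atTop_diagonal) R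

theorem exists_gromovProd_le_of_not (hX : IsDeltaHyperbolic X δ) (hx : AsymptoticSeq o x x)
    (hy : AsymptoticSeq o y y) (hxy : ¬ AsymptoticSeq o x y) :
    ∃ (C : ℝ) (N : ℕ), ∀ i ≥ N, ∀ j ≥ N, gromovProd o (x i) (y j) ≤ C := by
  rw [asymptoticSeq_iff] at hxy
  push Not at hxy
  obtain ⟨R, hR⟩ := hxy
  obtain ⟨N, hN⟩ := asymptoticSeq_iff.1 hx (R + 2 * δ)
  obtain ⟨M, hM⟩ := asymptoticSeq_iff.1 hy (R + 2 * δ)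
  refine ⟨R + 2 * δ, max N M, fun i hi j hj => ?_⟩
  by_contra! hlt
  obtain ⟨i', hi', j', hj', hlt'⟩ := hR (max N M)
  have := hX.sub_two_mul_le_gromovProd
    (hN i' (le_of_max_le_left hi') i (le_of_max_le_left hi)) hlt.le
    (hM j (le_of_max_le_right hj) j' (le_of_max_le_right hj'))
  linarith

theorem eventually_gromovProd_le (hX : IsDeltaHyperbolic X δ) (hx : AsymptoticSeq o x x')
    (hy : AsymptoticSeq o y y') {C : ℝ} (hC : ∀ n, gromovProd o (x n) (y n) ≤ C) :
    ∀ᶠ n in atTop, gromovProd o (x' n) (y' n) ≤ C + 2 * δ + 1 := by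
  filter_upwards [hx.eventually_le (C + 2 * δ + 1), hy.symm.eventually_le (C + 2 * δ + 1)]
    with n hxn hyn
  by_contra! hlt
  have := hX.sub_two_mul_le_gromovProd hxn hlt.le hyn
  linarith [hC n]

end AsymptoticSeq

end AsymptoticSequences

section GromovBoundary

variable {X : Type*} [MetricSpace X] {δ : ℝ}

/-- Asymptoticity as an equivalence relation on the sequences converging at infinity. -/
def gromovSetoid (hX : IsDeltaHyperbolic X δ) (o : X) :
    Setoid {x : ℕ → X // AsymptoticSeq o x x} where
  r x y := AsymptoticSeq o x y
  iseqv := ⟨fun x => x.2, AsymptoticSeq.symm, AsymptoticSeq.trans hX⟩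

/-- The Gromov boundary of a hyperbolic space, as classes of asymptotic sequences. The base point
is part of the encoding only, since asymptoticity does not depend on it. -/
def GromovBoundary (hX : IsDeltaHyperbolic X δ) (o : X) : Type _ :=
  Quotient (gromovSetoid hX o)

variable {hX : IsDeltaHyperbolic X δ} {o : X}

namespace GromovBoundary

/-- The boundary point to which a sequence converges. -/
def mk (hX : IsDeltaHyperbolic X δ) (x : ℕ → X) (hx : AsymptoticSeq o x x) :
    GromovBoundary hX o :=
  Quotient.mk (gromovSetoid hX o) ⟨x, hx⟩

variable {x y : ℕ → X} {hx : AsymptoticSeq o x x} {hy : AsymptoticSeq o y y}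

theorem mk_eq_mk : mk hX x hx = mk hX y hy ↔ AsymptoticSeq o x y :=
  Quotient.eq (r := gromovSetoid hX o)

theorem exists_mk (ξ : GromovBoundary hX o) : ∃ x hx, ξ = mk hX x hx := by
  obtain ⟨⟨x, hx⟩, rfl⟩ := Quotient.exists_rep ξ
  exact ⟨x, hx, rfl⟩

instance : MulAction (X ≃ᵢ X) (GromovBoundary hX o) where
  smul g := Quotient.map' (s₁ := gromovSetoid hX o) (s₂ := gromovSetoid hX o)
    (fun x => ⟨fun n => g (x.1 n), x.2.map g⟩) (fun _ _ h => AsymptoticSeq.map h g)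
  one_smul ξ := by
    obtain ⟨x, hx, rfl⟩ := ξ.exists_mk
    rfl
  mul_smul g h ξ := by
    obtain ⟨x, hx, rfl⟩ := ξ.exists_mk
    rfl

theorem smul_mk (g : X ≃ᵢ X) : g • mk hX x hx = mk hX (fun n => g (x n)) (hx.map g) := rfl

end GromovBoundary

end GromovBoundary

section OrbitDist

variable {X : Type*} [MetricSpace X] {δ : ℝ}

/-- The distance from `o` to `gⁱ o`, as a function of the exponent `i`. -/
noncomputable def orbitDist (g : X ≃ᵢ X) (o : X) (i : ℤ) : ℝ := dist o ((g ^ i) o)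

variable (g : X ≃ᵢ X) (o : X)

theorem orbitDist_natCast (n : ℕ) : orbitDist g o n = dist o ((g ^ n) o) := by
  rw [orbitDist, zpow_natCast]

theorem dist_zpow_zpow (i j : ℤ) : dist ((g ^ i) o) ((g ^ j) o) = orbitDist g o (j - i) := by
  rw [orbitDist, ← (g ^ i).dist_eq o, ← IsometryEquiv.mul_apply, ← zpow_add, add_sub_cancel]

theorem orbitDist_neg (i : ℤ) : orbitDist g o (-i) = orbitDist g o i := by
  rw [← zero_sub, ← dist_zpow_zpow, zpow_zero, dist_comm]
  rfl

theorem orbitDist_add_le (i j : ℤ) :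
    orbitDist g o (i + j) ≤ orbitDist g o i + orbitDist g o j := by
  rw [← add_sub_cancel_left i j, ← dist_zpow_zpow, add_sub_cancel_left]
  exact dist_triangle _ _ _

variable {g o}

theorem IsDeltaHyperbolic.orbitDist_add_orbitDist_le_or (hX : IsDeltaHyperbolic X δ)
    (i j k l : ℤ) :
    orbitDist g o (j - i) + orbitDist g o (l - k) ≤
        orbitDist g o (k - i) + orbitDist g o (l - j) + 2 * δ ∨
      orbitDist g o (j - i) + orbitDist g o (l - k) ≤
        orbitDist g o (l - i) + orbitDist g o (k - j) + 2 * δ := by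
  simpa only [dist_zpow_zpow] using
    hX.dist_add_dist_le_or ((g ^ i) o) ((g ^ j) o) ((g ^ k) o) ((g ^ l) o)

theorem IsDeltaHyperbolic.orbitDist_sub_le_of_doubling_le (hX : IsDeltaHyperbolic X δ) {n m : ℤ}
    (hn : orbitDist g o (2 * n) ≤ orbitDist g o n + 2 * δ) :
    orbitDist g o (m - n) ≤ max (orbitDist g o n) (orbitDist g o m) + 4 * δ := by
  have hsum : orbitDist g o (m + n) + orbitDist g o (m - n) ≤
        2 * orbitDist g o n + 2 * δ ∨
      orbitDist g o (m + n) + orbitDist g o (m - n) ≤ 2 * orbitDist g o m + 2 * δ := by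
    have h := hX.orbitDist_add_orbitDist_le_or (g := g) (o := o) 0 (m + n) n m
    rw [show m - (m + n) = -n by ring, show n - (m + n) = -m by ring, orbitDist_neg,
      orbitDist_neg, sub_zero, sub_zero, sub_zero] at h
    simpa only [two_mul] using h
  have hdiff : orbitDist g o (m - n) ≤ orbitDist g o (m + n) + 2 * δ ∨
      orbitDist g o (m - n) ≤ orbitDist g o m + 4 * δ := by
    have h := hX.orbitDist_add_orbitDist_le_or (g := g) (o := o) n m 0 (-n)
    rw [show -n - m = -(m + n) by ring, show -n - n = -(2 * n) by ring, sub_zero, zero_sub,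
      zero_sub, orbitDist_neg, orbitDist_neg, orbitDist_neg, orbitDist_neg] at h
    exact h.imp (by intro; linarith) (by intro; linarith)
  have hδ := hX.nonneg o
  have hn_le := le_max_left (orbitDist g o n) (orbitDist g o m)
  have hm_le := le_max_right (orbitDist g o n) (orbitDist g o m)
  rcases hsum with hsum | hsum <;> rcases hdiff with hdiff | hdiff <;> linarith

theorem IsDeltaHyperbolic.monotone_orbitDist_of_lt_doubling (hX : IsDeltaHyperbolic X δ) {N : ℤ}
    (hN : orbitDist g o N + 2 * δ < orbitDist g o (2 * N)) :
    Monotone fun k : ℕ => orbitDist g o (k * N) := by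
  refine monotone_nat_of_le_succ fun k => ?_
  induction k with
  | zero => simp [orbitDist]
  | succ k ih =>
    have h := hX.orbitDist_add_orbitDist_le_or (g := g) (o := o) 0 (2 * N) N ((k + 2) * N)
    rw [show ((k : ℤ) + 2) * N - N = (k + 1) * N by ring,
      show ((k : ℤ) + 2) * N - 2 * N = k * N by ring, show N - 2 * N = -N by ring,
      orbitDist_neg, sub_zero, sub_zero, sub_zero] at h
    push_cast at ih ⊢
    rw [show (k : ℤ) + 1 + 1 = k + 2 by ring]
    rcases h with h | h <;> linarith

theorem IsDeltaHyperbolic.exists_orbitDist_le_of_lt_doubling (hX : IsDeltaHyperbolic X δ) {N : ℕ}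
    (hN : orbitDist g o N + 2 * δ < orbitDist g o (2 * N)) :
    ∃ C, ∀ l m : ℕ, l ≤ m → orbitDist g o l ≤ orbitDist g o m + C := by
  have hN0 : 0 < N := by
    refine Nat.pos_of_ne_zero fun h0 => hN.not_ge ?_
    simp [h0, hX.nonneg o]
  obtain ⟨B, hB⟩ := ((Set.finite_Iio N).image fun s : ℕ => orbitDist g o s).bddAbove
  have hrem : ∀ n : ℕ, orbitDist g o (n % N : ℕ) ≤ B := fun n =>
    hB (Set.mem_image_of_mem _ (Nat.mod_lt n hN0))
  have hdiv : ∀ n : ℕ, ((n / N : ℕ) * N + (n % N : ℕ) : ℤ) = n := fun n => by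
    exact_mod_cast Nat.div_add_mod' n N
  refine ⟨2 * B, fun l m hlm => ?_⟩
  calc orbitDist g o l
      ≤ orbitDist g o ((l / N : ℕ) * N) + orbitDist g o (l % N : ℕ) := by
        rw [← hdiv l]
        exact orbitDist_add_le g o _ _
    _ ≤ orbitDist g o ((m / N : ℕ) * N) + B :=
        add_le_add (hX.monotone_orbitDist_of_lt_doubling hN (Nat.div_le_div_right hlm)) (hrem l)
    _ ≤ orbitDist g o m + orbitDist g o (m % N : ℕ) + B := by
        rw [eq_sub_of_add_eq (hdiv m), sub_eq_add_neg, ← orbitDist_neg g o (m % N : ℕ)]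
        gcongr
        exact orbitDist_add_le g o _ _
    _ ≤ orbitDist g o m + 2 * B := by linarith [hrem m]

-- Either doubling an exponent never increases the displacement by more than `2δ`, or the
-- displacement is coarsely monotone in the exponent.
theorem IsDeltaHyperbolic.exists_orbitDist_sub_le (hX : IsDeltaHyperbolic X δ) :
    ∃ C, ∀ n m : ℕ, n ≤ m →
      orbitDist g o (m - n) ≤ max (orbitDist g o n) (orbitDist g o m) + C := by
  by_cases hd : ∀ n : ℕ, orbitDist g o (2 * n) ≤ orbitDist g o n + 2 * δ
  · exact ⟨4 * δ, fun n m _ => hX.orbitDist_sub_le_of_doubling_le (hd n)⟩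
  · push Not at hd
    obtain ⟨N, hN⟩ := hd
    obtain ⟨C, hC⟩ := hX.exists_orbitDist_le_of_lt_doubling hN
    refine ⟨C, fun n m hnm => ?_⟩
    rw [← Nat.cast_sub hnm]
    exact (hC _ m (Nat.sub_le m n)).trans (by gcongr; exact le_max_right _ _)

end OrbitDist

section Escapes

open MulAction

variable {X : Type*} [MetricSpace X] {δ : ℝ} {o : X} {g h u : X ≃ᵢ X}

/-- The orbit of `o` under the positive powers of `g` leaves every ball. -/
def Escapes (o : X) (g : X ≃ᵢ X) : Prop :=
  Tendsto (fun n : ℕ => dist o ((g ^ n) o)) atTop atTop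

namespace Escapes

theorem of_not_isOfFinOrder {Γ : Subgroup (X ≃ᵢ X)} (hΓ : IsDiscreteSubgroup Γ) (hg : g ∈ Γ)
    (hinf : ¬ IsOfFinOrder g) (o : X) : Escapes o g := by
  refine Filter.tendsto_atTop.2 fun R => ?_
  rw [← Nat.cofinite_eq_atTop]
  have hfin := (hΓ o R).preimage (injective_pow_iff_not_isOfFinOrder.2 hinf).injOn
  exact hfin.subset fun n hn => ⟨pow_mem hg n, le_of_not_ge hn⟩

theorem inv (hg : Escapes o g) : Escapes o g⁻¹ := by
  refine hg.congr fun n => ?_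
  rw [inv_pow, ← (g ^ n).dist_eq o ((g ^ n)⁻¹ o), IsometryEquiv.apply_inv_self, dist_comm]

theorem pow (hg : Escapes o g) {m : ℕ} (hm : 0 < m) : Escapes o (g ^ m) := by
  have hmul : Tendsto (fun n => m * n) atTop atTop := tendsto_id.const_mul_atTop' hm
  simpa only [Escapes, ← pow_mul, Function.comp_def] using hg.comp hmul

theorem asymptoticSeq (hX : IsDeltaHyperbolic X δ) (hg : Escapes o g) :
    AsymptoticSeq o (fun n => (g ^ n) o) (fun n => (g ^ n) o) := by
  obtain ⟨C, hC⟩ := hX.exists_orbitDist_sub_le (g := g) (o := o)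
  refine asymptoticSeq_self_of_min_le
    ((tendsto_atTop_add_const_right _ (-C) hg).atTop_div_const two_pos) fun i j hij => ?_
  have h := hC i j hij
  rw [← dist_zpow_zpow, orbitDist_natCast, orbitDist_natCast, zpow_natCast, zpow_natCast] at h
  have hsum := min_add_max (dist o ((g ^ i) o)) (dist o ((g ^ j) o))
  rw [min_div_div_right zero_le_two, min_add_add_right]
  unfold gromovProd
  linarith

/-- The limit of `gⁿ o` in the Gromov boundary. -/
def limitPoint (hX : IsDeltaHyperbolic X δ) (hg : Escapes o g) : GromovBoundary hX o :=
  GromovBoundary.mk hX (fun n => (g ^ n) o) (hg.asymptoticSeq hX)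

variable (hX : IsDeltaHyperbolic X δ)

theorem smul_limitPoint_of_commute (hg : Escapes o g) (hug : Commute u g) :
    u • hg.limitPoint hX = hg.limitPoint hX := by
  rw [limitPoint, GromovBoundary.smul_mk, GromovBoundary.mk_eq_mk]
  refine ((hg.asymptoticSeq hX).of_dist_le (C := dist o (u o)) fun n => ?_).symm
  rw [← IsometryEquiv.mul_apply, (hug.pow_right n).eq, IsometryEquiv.mul_apply,
    (g ^ n).dist_eq]

theorem limitPoint_eq_of_eq_pow (hg : Escapes o g) (hh : Escapes o h) {m : ℕ} (hm : 0 < m)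
    (hgh : h = g ^ m) : hh.limitPoint hX = hg.limitPoint hX := by
  have hmul : Tendsto (fun n => m * n) atTop atTop := tendsto_id.const_mul_atTop' hm
  have := (hg.asymptoticSeq hX).comp_right hmul
  simp only [pow_mul, ← hgh] at this
  exact GromovBoundary.mk_eq_mk.2 this.symm

-- If `z` represents `ξ` and stays away from `u⁻ⁿ o`, then `o` and `u⁻ⁿ o` are almost in line
-- with `z`, so that `uⁿ z`, which is asymptotic to `z`, follows `uⁿ o`.
theorem eq_limitPoint_or_of_smul_eq (hu : Escapes o u) {ξ : GromovBoundary hX o}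
    (hξ : u • ξ = ξ) : ξ = hu.limitPoint hX ∨ ξ = hu.inv.limitPoint hX := by
  have hfix : ∀ n : ℕ, (u ^ n) • ξ = ξ := fun n =>
    (fixedBy_subset_fixedBy_zpow _ u n) hξ
  obtain ⟨z, hz, rfl⟩ := ξ.exists_mk
  refine or_iff_not_imp_right.2 fun hne => GromovBoundary.mk_eq_mk.2 ?_
  obtain ⟨C, N, hN⟩ := hz.exists_gromovProd_le_of_not hX (hu.inv.asymptoticSeq hX)
    fun h => hne (GromovBoundary.mk_eq_mk.2 h)
  refine asymptoticSeq_iff.2 fun R => ?_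
  obtain ⟨K, hK⟩ := asymptoticSeq_iff.1 hz (R + 2 * δ)
  obtain ⟨M, hM⟩ := (Filter.tendsto_atTop.1 hu (R + 2 * δ + C)).exists_forall_of_atTop
  refine ⟨max K (max M N), fun j hj n hn => ?_⟩
  simp only [ge_iff_le, max_le_iff] at hj hn
  have hasymp := GromovBoundary.mk_eq_mk.1 (hfix n)
  obtain ⟨k, hk, hkK, hkN⟩ := ((hasymp.symm.eventually_le (R + 2 * δ)).and
    ((eventually_ge_atTop K).and (eventually_ge_atTop N))).exists
  have hfar : R + 2 * δ ≤ gromovProd o ((u ^ n) (z k)) ((u ^ n) o) := by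
    have hle : gromovProd ((u ^ n) o) o ((u ^ n) (z k)) ≤ C := by
      rw [gromovProd_comm, ← gromovProd_map (u ^ n)⁻¹, IsometryEquiv.inv_apply_self,
        IsometryEquiv.inv_apply_self, ← inv_pow]
      exact hN k hkN n hn.2.2
    have hsum := gromovProd_add_gromovProd o ((u ^ n) o) ((u ^ n) (z k))
    rw [gromovProd_comm]
    linarith [hM n hn.2.1]
  have := hX.sub_two_mul_le_gromovProd (hK j hj.1 k hkK) hk hfar
  linarith

theorem fixedBy_eq (hg : Escapes o g) :
    fixedBy (GromovBoundary hX o) g = {hg.limitPoint hX, hg.inv.limitPoint hX} := by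
  ext ξ
  rw [mem_fixedBy, Set.mem_insert_iff, Set.mem_singleton_iff]
  refine ⟨hg.eq_limitPoint_or_of_smul_eq hX, ?_⟩
  rintro (rfl | rfl)
  · exact hg.smul_limitPoint_of_commute hX (Commute.refl g)
  · exact hg.inv.smul_limitPoint_of_commute hX (Commute.refl g).inv_right

theorem hasRigidFixedSet (hg : Escapes o g) : HasRigidFixedSet (GromovBoundary hX o) g where
  finite := by
    rw [hg.fixedBy_eq hX]
    exact Set.toFinite _
  fixedBy_pow m hm := by
    rw [(hg.pow hm).fixedBy_eq hX, hg.fixedBy_eq hX,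
      hg.limitPoint_eq_of_eq_pow hX (hg.pow hm) hm rfl,
      hg.inv.limitPoint_eq_of_eq_pow hX (hg.pow hm).inv hm (inv_pow g m).symm]

end Escapes

end Escapes

section GeodesicLines

variable {X : Type*} [MetricSpace X]

/-- Any two points lie on a bi-infinite geodesic. -/
def HasGeodesicLines (X : Type*) [MetricSpace X] : Prop :=
  ∀ x y : X, ∃ γ : ℝ → X, Isometry γ ∧ γ 0 = x ∧ γ (dist x y) = y

theorem IsGCB.hasGeodesicLines {σ : X → X → ℝ → X} (hσ : IsGCB σ) : HasGeodesicLines X := by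
  intro x y
  obtain ⟨γ, hγ, -, hσγ⟩ := hσ.geodComplete x y
  have h0 := hσγ 0 (Set.left_mem_Icc.2 zero_le_one)
  have h1 := hσγ 1 (Set.right_mem_Icc.2 zero_le_one)
  rw [hσ.source, zero_mul] at h0
  rw [hσ.target, one_mul] at h1
  exact ⟨γ, hγ, h0.symm, h1.symm⟩

namespace HasGeodesicLines

theorem preconnectedSpace (hX : HasGeodesicLines X) : PreconnectedSpace X := by
  refine ⟨isPreconnected_of_forall_pair fun x _ y _ => ?_⟩
  obtain ⟨γ, hγ, h0, h1⟩ := hX x y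
  exact ⟨Set.range γ, Set.subset_univ _, ⟨0, h0⟩, ⟨_, h1⟩, isPreconnected_range hγ.continuous⟩

theorem exists_opposite_ray (hX : HasGeodesicLines X) (o y : X) :
    ∃ p : ℝ → X, Isometry p ∧ p 0 = o ∧ ∀ t ≥ 0, gromovProd o (p t) y = 0 := by
  obtain ⟨γ, hγ, h0, h1⟩ := hX o y
  refine ⟨fun t => γ (-t), hγ.comp (IsometryEquiv.neg ℝ).isometry, by simpa using h0,
    fun t ht => ?_⟩
  have hot : dist o (γ (-t)) = t := by
    rw [← h0, hγ.dist_eq, Real.dist_eq, zero_sub, neg_neg, abs_of_nonneg ht]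
  have hty : dist (γ (-t)) y = t + dist o y := by
    have hneg : -t - dist o y ≤ 0 := by linarith [dist_nonneg (x := o) (y := y)]
    nth_rw 1 [← h1]
    rw [hγ.dist_eq, Real.dist_eq, abs_of_nonpos hneg]
    ring
  rw [gromovProd, hot, hty, sub_self, zero_div]

end HasGeodesicLines

theorem gromovProd_eq_min_of_isometry {p : ℝ → X} (hp : Isometry p) {s t : ℝ} (hs : 0 ≤ s)
    (ht : 0 ≤ t) : gromovProd (p 0) (p s) (p t) = min s t := by
  rw [gromovProd, hp.dist_eq, hp.dist_eq, hp.dist_eq, dist_zero_left, dist_zero_left,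
    Real.norm_of_nonneg hs, Real.norm_of_nonneg ht, Real.dist_eq, ← max_sub_min_eq_abs',
    ← min_add_max s t]
  ring

theorem asymptoticSeq_of_isometry {p : ℝ → X} (hp : Isometry p) {t : ℕ → ℝ}
    (ht : Tendsto t atTop atTop) (ht0 : ∀ n, 0 ≤ t n) :
    AsymptoticSeq (p 0) (fun n => p (t n)) (fun n => p (t n)) :=
  asymptoticSeq_self_of_min_le ht fun i j _ =>
    (gromovProd_eq_min_of_isometry hp (ht0 i) (ht0 j)).ge

end GeodesicLines

section OneEnd

open MulAction

variable {X : Type*} [MetricSpace X] {δ : ℝ} {o : X}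

theorem AsymptoticSeq.exists_gromovProd_le_of_eq_zero (hX : IsDeltaHyperbolic X δ)
    {x : ℕ → X} (hx : AsymptoticSeq o x x) :
    ∃ N, ∀ p, gromovProd o p (x N) = 0 → ∀ n ≥ N, gromovProd o p (x n) ≤ δ := by
  obtain ⟨N, hN⟩ := asymptoticSeq_iff.1 hx (δ + 1)
  refine ⟨N, fun p hp n hn => ?_⟩
  by_contra! hlt
  have hmin := lt_min hlt ((lt_add_one δ).trans_le (hN n hn N le_rfl))
  have := hX.sub_le_gromovProd (min_le_left (gromovProd o p (x n)) (gromovProd o (x n) (x N)))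
    (min_le_right _ _)
  linarith

theorem HasGeodesicLines.exists_ray_forall_gromovProd_le (hlines : HasGeodesicLines X)
    (hX : IsDeltaHyperbolic X δ) {x : ℕ → X} (hx : AsymptoticSeq o x x) :
    ∃ p : ℝ → X, Isometry p ∧ p 0 = o ∧
      ∀ᶠ n in atTop, ∀ t ≥ 0, gromovProd o (p t) (x n) ≤ δ := by
  obtain ⟨N, hN⟩ := hx.exists_gromovProd_le_of_eq_zero hX
  obtain ⟨p, hp, hp0, hprod⟩ := hlines.exists_opposite_ray o (x N)
  exact ⟨p, hp, hp0, eventually_atTop.2 ⟨N, fun n hn t ht => hN (p t) (hprod t ht) n hn⟩⟩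

-- Seen from `p`, the sequences `x` and `g x` agree up to a large distance, while both follow the
-- orbit points `o` and `g o` up to distance almost `dist o p`.
theorem IsDeltaHyperbolic.dist_le_of_asymptoticSeq_map (hX : IsDeltaHyperbolic X δ)
    {g : X ≃ᵢ X} {p : X} {x : ℕ → X} (hgx : AsymptoticSeq o (fun n => g (x n)) x) {C : ℝ}
    (hp : ∀ᶠ n in atTop, gromovProd o p (x n) ≤ C) :
    dist o (g o) ≤ 2 * C + 4 * δ + 3 * dist p (g p) := by
  obtain ⟨n, hpn, hn⟩ := (hp.and ((hgx.change_base p).eventually_le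
    (dist o p - C - dist p (g p)))).exists
  have hox : dist o p - C ≤ gromovProd p (x n) o := by
    rw [gromovProd_comm]
    linarith [gromovProd_add_gromovProd o p (x n)]
  have hgox : dist o p - C - dist p (g p) ≤ gromovProd p (g o) (g (x n)) := by
    have hmap := gromovProd_map g p o (x n)
    have hbase := gromovProd_le_add_dist_base (g p) p (g o) (g (x n))
    rw [gromovProd_comm] at hox
    linarith [dist_comm p (g p)]
  have hgo := hX.sub_two_mul_le_gromovProd hgox hn (by linarith [dist_nonneg (x := p) (y := g p)])
  rw [gromovProd] at hgo
  linarith [g.dist_eq p o, dist_triangle p (g p) (g o), dist_comm p o, dist_comm o (g o)]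

-- Move `p` away from `ξ` along a ray. If some `gₙ` displaces the `n`-th point of the ray by less
-- than `r`, then all the `gₙ` displace `o` by a bounded amount, so that a single one of them works
-- for infinitely many `n`; it fixes the end of the ray, which differs from `ξ`.
theorem HasGeodesicLines.exists_forall_le_dist (hlines : HasGeodesicLines X)
    {hX : IsDeltaHyperbolic X δ} {Γ : Subgroup (X ≃ᵢ X)} (hΓ : IsDiscreteSubgroup Γ)
    {ξ : GromovBoundary hX o} (hξ : ∀ g ∈ Γ, g • ξ = ξ) (r : ℝ) :
    ∃ p : X, ∀ g ∈ Γ, fixedBy (GromovBoundary hX o) g ⊆ {ξ} → r ≤ dist p (g p) := by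
  by_contra! hcon
  obtain ⟨x, hx, rfl⟩ := ξ.exists_mk
  obtain ⟨p, hp, rfl, hpx⟩ := hlines.exists_ray_forall_gromovProd_le hX hx
  choose g hgΓ hgfix hgr using fun n : ℕ => hcon (p n)
  have hbound : ∀ n, dist (p 0) (g n (p 0)) ≤ 2 * δ + 4 * δ + 3 * r := fun n => by
    have := hX.dist_le_of_asymptoticSeq_map (GromovBoundary.mk_eq_mk.1 (hξ _ (hgΓ n)))
      (hpx.mono fun k hk => hk n n.cast_nonneg)
    linarith [hgr n]
  obtain ⟨h, -, hh⟩ : ∃ h ∈ {h | h ∈ Γ ∧ dist (p 0) (h (p 0)) ≤ 2 * δ + 4 * δ + 3 * r},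
      ∃ᶠ n in atTop, g n = h :=
    (hΓ _ _).frequently_exists.1
      (Frequently.of_forall fun n => ⟨g n, ⟨hgΓ n, hbound n⟩, rfl⟩)
  obtain ⟨φ, hφ, hφh⟩ := extraction_of_frequently_atTop hh
  have hend := asymptoticSeq_of_isometry hp (t := fun n => (φ n : ℝ))
    (tendsto_natCast_atTop_atTop.comp hφ.tendsto_atTop) fun n => (φ n).cast_nonneg
  have hfix : h • GromovBoundary.mk hX _ hend = GromovBoundary.mk hX _ hend := by
    rw [GromovBoundary.smul_mk, GromovBoundary.mk_eq_mk]
    refine (hend.of_dist_le (C := r) fun n => ?_).symm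
    rw [← hφh n]
    exact (hgr (φ n)).le
  have hasymp := GromovBoundary.mk_eq_mk.1 (hgfix (φ 0) (by rwa [hφh 0]))
  obtain ⟨n, hn, hle⟩ := ((hasymp.eventually_le (δ + 1)).and hpx).exists
  linarith [hle (φ n) (φ n).cast_nonneg]

end OneEnd

section CoarseGeodesics

variable {X : Type*} [MetricSpace X] {δ : ℝ}

theorem exists_abs_sub_le_of_le_add {f : ℕ → ℝ} {A c : ℝ} {m : ℕ} (hA : 0 ≤ A)
    (hf : ∀ k, f (k + 1) ≤ f k + A) (h0 : f 0 ≤ c) (hm : c ≤ f m) :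
    ∃ k ≤ m, |f k - c| ≤ A := by
  induction m with
  | zero => exact ⟨0, le_rfl, by rwa [h0.antisymm hm, sub_self, abs_zero]⟩
  | succ m ih =>
    rcases le_total c (f m) with hle | hle
    · obtain ⟨k, hk, hkc⟩ := ih hle
      exact ⟨k, hk.trans m.le_succ, hkc⟩
    · refine ⟨m, m.le_succ, ?_⟩
      rw [abs_sub_comm, abs_of_nonneg (sub_nonneg.2 hle)]
      linarith [hf m]

theorem IsDeltaHyperbolic.dist_le_of_gromovProd_le (hX : IsDeltaHyperbolic X δ) {x y c v : X}
    {C : ℝ} (hc : gromovProd c x y ≤ C) (hv : gromovProd v x y ≤ C) :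
    dist c v ≤ |dist x c - dist x v| + 2 * C + 2 * δ := by
  unfold gromovProd at hc hv
  rw [dist_comm x c, dist_comm x v]
  have hle := le_abs_self (dist c x - dist v x)
  have hge := neg_abs_le (dist c x - dist v x)
  rcases hX.dist_add_dist_le_or c v x y with h | h <;> linarith

theorem IsDeltaHyperbolic.exists_dist_le_of_gromovProd_le (hX : IsDeltaHyperbolic X δ)
    {b : ℕ → X} {v : X} {m : ℕ} {A C : ℝ} (hA : ∀ k, dist (b k) (b (k + 1)) ≤ A)
    (hb : ∀ k ≤ m, gromovProd (b k) (b 0) (b m) ≤ C) (hv : gromovProd v (b 0) (b m) ≤ C) :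
    ∃ k ≤ m, dist (b k) v ≤ A + 4 * C + 2 * δ := by
  obtain ⟨k, hk, hkc⟩ := exists_abs_sub_le_of_le_add (f := fun k => dist (b 0) (b k)) (m := m)
    (c := min (dist (b 0) v) (dist (b 0) (b m))) (dist_nonneg.trans (hA 0))
    (fun k => (dist_triangle _ _ _).trans (by gcongr; exact hA k))
    (by rw [dist_self]; positivity) (min_le_right _ _)
  have hmin : dist (b 0) v - 2 * C ≤ min (dist (b 0) v) (dist (b 0) (b m)) := by
    have hC := (gromovProd_nonneg _ _ _).trans hv
    unfold gromovProd at hv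
    refine le_min (by linarith) ?_
    linarith [dist_comm v (b 0), dist_nonneg (x := v) (y := b m)]
  refine ⟨k, hk, (hX.dist_le_of_gromovProd_le (hb k hk) hv).trans ?_⟩
  have habs : |dist (b 0) (b k) - dist (b 0) v| ≤ A + 2 * C := by
    rw [abs_le] at hkc ⊢
    constructor <;> linarith [min_le_left (dist (b 0) v) (dist (b 0) (b m))]
  linarith

end CoarseGeodesics

section TwoEnds

open MulAction
open scoped Pointwise

variable {X : Type*} [MetricSpace X] {δ : ℝ} {o : X} {g : X ≃ᵢ X}

theorem dist_pow_pow_add (g : X ≃ᵢ X) (o : X) (n N : ℕ) :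
    dist ((g ^ n) o) ((g ^ (n + N)) o) = dist o ((g ^ N) o) := by
  rw [pow_add, IsometryEquiv.mul_apply, (g ^ n).dist_eq]

namespace Escapes

theorem exists_gromovProd_pow_le (hX : IsDeltaHyperbolic X δ) (hg : Escapes o g)
    (hends : hg.limitPoint hX ≠ hg.inv.limitPoint hX) :
    ∃ C, ∀ n m : ℕ, gromovProd o ((g ^ n) o) ((g⁻¹ ^ m) o) ≤ C := by
  obtain ⟨C, N, hN⟩ := (hg.asymptoticSeq hX).exists_gromovProd_le_of_not hX
    (hg.inv.asymptoticSeq hX) fun h => hends (GromovBoundary.mk_eq_mk.2 h)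
  refine ⟨C + dist o ((g⁻¹ ^ N) o) + dist o ((g ^ N) o), fun n m => ?_⟩
  calc gromovProd o ((g ^ n) o) ((g⁻¹ ^ m) o)
      ≤ gromovProd o ((g ^ (n + N)) o) ((g⁻¹ ^ m) o) + dist o ((g ^ N) o) := by
        rw [← dist_pow_pow_add g o n]
        exact gromovProd_le_add_dist_left _ _ _ _
    _ ≤ gromovProd o ((g ^ (n + N)) o) ((g⁻¹ ^ (m + N)) o) + dist o ((g⁻¹ ^ N) o) +
          dist o ((g ^ N) o) := by
        rw [← dist_pow_pow_add g⁻¹ o m]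
        gcongr
        exact gromovProd_le_add_dist_right _ _ _ _
    _ ≤ C + dist o ((g⁻¹ ^ N) o) + dist o ((g ^ N) o) := by
        gcongr
        exact hN _ (Nat.le_add_left N n) _ (Nat.le_add_left N m)

theorem exists_gromovProd_le_of_smul_fixedBy_eq (hX : IsDeltaHyperbolic X δ) (hg : Escapes o g)
    {u : X ≃ᵢ X}
    (hu : u • fixedBy (GromovBoundary hX o) g = fixedBy (GromovBoundary hX o) g) {C : ℝ}
    (hC : ∀ n m : ℕ, gromovProd o ((g ^ n) o) ((g⁻¹ ^ m) o) ≤ C) :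
    ∃ n : ℕ, gromovProd (u o) ((g⁻¹ ^ n) o) ((g ^ n) o) ≤ C + 2 * δ + 1 := by
  have hC' : ∀ n : ℕ, gromovProd (u o) (u ((g ^ n) o)) (u ((g⁻¹ ^ n) o)) ≤ C := fun n => by
    rw [gromovProd_map]
    exact hC n n
  rw [hg.fixedBy_eq hX, Set.smul_set_insert, Set.smul_set_singleton, Set.pair_eq_pair_iff] at hu
  simp only [limitPoint, GromovBoundary.smul_mk, GromovBoundary.mk_eq_mk] at hu
  rcases hu with ⟨hpos, hneg⟩ | ⟨hpos, hneg⟩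
  · obtain ⟨n, hn⟩ := ((hpos.change_base (u o)).eventually_gromovProd_le hX
      (hneg.change_base (u o)) hC').exists
    exact ⟨n, by rwa [gromovProd_comm]⟩
  · exact ((hpos.change_base (u o)).eventually_gromovProd_le hX
      (hneg.change_base (u o)) hC').exists

theorem exists_dist_zpow_le_of_smul_fixedBy_eq (hX : IsDeltaHyperbolic X δ) (hg : Escapes o g)
    (hends : hg.limitPoint hX ≠ hg.inv.limitPoint hX) :
    ∃ C, ∀ u : X ≃ᵢ X, u • fixedBy (GromovBoundary hX o) g = fixedBy (GromovBoundary hX o) g →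
      ∃ k : ℤ, dist ((g ^ k) o) (u o) ≤ C := by
  obtain ⟨C, hC⟩ := hg.exists_gromovProd_pow_le hX hends
  refine ⟨dist o (g o) + 4 * (C + 2 * δ + 1) + 2 * δ, fun u hu => ?_⟩
  obtain ⟨n, hn⟩ := hg.exists_gromovProd_le_of_smul_fixedBy_eq hX hu hC
  have hshift : ∀ k : ℕ, (g⁻¹ ^ n) ((g ^ k) o) = (g ^ (k - n : ℤ)) o := fun k => by
    rw [sub_eq_neg_add, zpow_add, zpow_neg, zpow_natCast, zpow_natCast, inv_pow,
      IsometryEquiv.mul_apply]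
  have hstep : ∀ k, dist ((g⁻¹ ^ n) ((g ^ k) o)) ((g⁻¹ ^ n) ((g ^ (k + 1)) o)) ≤ dist o (g o) :=
    fun k => by rw [(g⁻¹ ^ n).dist_eq, dist_pow_pow_add, pow_one]
  have hpath : ∀ k ≤ 2 * n, gromovProd ((g⁻¹ ^ n) ((g ^ k) o)) ((g⁻¹ ^ n) ((g ^ 0) o))
      ((g⁻¹ ^ n) ((g ^ (2 * n)) o)) ≤ C + 2 * δ + 1 := fun k hk => by
    have h := hC (2 * n - k) k
    rw [← gromovProd_map (g ^ k), ← IsometryEquiv.mul_apply, ← pow_add, Nat.add_sub_cancel' hk,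
      inv_pow, IsometryEquiv.apply_inv_self, gromovProd_comm] at h
    rw [gromovProd_map, pow_zero]
    exact h.trans (by linarith [hX.nonneg o])
  have hend : (g⁻¹ ^ n) ((g ^ (2 * n)) o) = (g ^ n) o := by
    rw [two_mul, pow_add, inv_pow, IsometryEquiv.mul_apply, IsometryEquiv.inv_apply_self]
  obtain ⟨k, -, hk⟩ := hX.exists_dist_le_of_gromovProd_le hstep hpath
    (v := u o) (by rwa [hend, pow_zero])
  exact ⟨k - n, by rwa [← hshift]⟩

end Escapes

theorem IsVirtuallyNilpotent.of_finiteIndex_zpowers {G : Type*} [Group G] (g : G)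
    [hfin : (Subgroup.zpowers g).FiniteIndex] : IsVirtuallyNilpotent G :=
  letI := IsCyclic.commGroup (α := Subgroup.zpowers g)
  ⟨Subgroup.zpowers g, hfin, CommGroup.isNilpotent⟩

theorem isVirtuallyNilpotent_of_forall_exists_dist_zpow_le {Γ : Subgroup (X ≃ᵢ X)}
    (hΓ : IsDiscreteSubgroup Γ) (hg : g ∈ Γ) {C : ℝ}
    (hC : ∀ u ∈ Γ, ∃ k : ℤ, dist ((g ^ k) o) (u o) ≤ C) : IsVirtuallyNilpotent Γ := by
  lift g to Γ using hg
  have hfin : {s : Γ | dist o ((s : X ≃ᵢ X) o) ≤ C}.Finite :=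
    ((hΓ o C).preimage Subtype.val_injective.injOn).subset fun s hs => ⟨s.2, hs⟩
  have := hfin.to_subtype
  have hsurj : Function.Surjective fun s : {s : Γ | dist o ((s : X ≃ᵢ X) o) ≤ C} =>
      ((s.1⁻¹ : Γ) : Γ ⧸ Subgroup.zpowers g) := fun q => by
    obtain ⟨u, rfl⟩ := QuotientGroup.mk_surjective q
    obtain ⟨k, hk⟩ := hC (u⁻¹ : Γ) (u⁻¹).2
    have hmem : dist o ((((g ^ k)⁻¹ * u⁻¹ : Γ) : X ≃ᵢ X) o) ≤ C := by
      rwa [Subgroup.coe_mul, Subgroup.coe_inv, Subgroup.coe_zpow, ← (↑g ^ k : X ≃ᵢ X).dist_eq o,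
        IsometryEquiv.mul_apply, IsometryEquiv.apply_inv_self]
    refine ⟨⟨_, hmem⟩, ?_⟩
    simp only [mul_inv_rev, inv_inv]
    exact QuotientGroup.mk_mul_of_mem u (zpow_mem (Subgroup.mem_zpowers g) k)
  have := Finite.of_surjective _ hsurj
  have := Subgroup.finiteIndex_of_finite_quotient (H := Subgroup.zpowers g)
  exact .of_finiteIndex_zpowers g

end TwoEnds

section ShortElements

open MulAction
open scoped Pointwise

variable {X : Type*} [MetricSpace X] {δ ε : ℝ} {Γ : Subgroup (X ≃ᵢ X)} {o x y : X}
  {g h u : X ≃ᵢ X}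

/-- The elements of infinite order of `Γ` displacing `x` by less than `ε`. The minimal free
displacement of `Γ` at `x` is at least `ε` exactly when there are none. -/
def shortElements (Γ : Subgroup (X ≃ᵢ X)) (ε : ℝ) (x : X) : Set (X ≃ᵢ X) :=
  {g | g ∈ Γ ∧ ¬ IsOfFinOrder g ∧ dist x (g x) < ε}

theorem conj_mem_shortElements (hg : g ∈ shortElements Γ ε x) (hu : u ∈ Γ) :
    u * g * u⁻¹ ∈ shortElements Γ ε (u x) := by
  refine ⟨mul_mem (mul_mem hu hg.1) (inv_mem hu), fun h => hg.2.1 ?_, ?_⟩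
  · exact (MulAut.conj u).injective.isOfFinOrder_iff (f := (MulAut.conj u).toMonoidHom).1 h
  · simpa only [IsometryEquiv.mul_apply, IsometryEquiv.inv_apply_self, u.dist_eq] using hg.2.2

theorem eventually_mem_shortElements (hg : g ∈ shortElements Γ ε x) :
    ∀ᶠ y in nhds x, g ∈ shortElements Γ ε y := by
  have hcont : Continuous fun y => dist y (g y) := continuous_id.dist g.continuous
  filter_upwards [hcont.continuousAt.eventually_lt_const hg.2.2] with y hy
  exact ⟨hg.1, hg.2.1, hy⟩

variable (hX : IsDeltaHyperbolic X δ) (hΓ : IsDiscreteSubgroup Γ)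
  (hmarg : ∀ x r, 0 ≤ r → r < ε → IsVirtuallyNilpotent ↥(almostStabilizer Γ r x))

include hΓ

theorem escapes_of_mem_shortElements (hg : g ∈ shortElements Γ ε x) (o : X) : Escapes o g :=
  .of_not_isOfFinOrder hΓ hg.1 hg.2.1 o

include hmarg

theorem fixedBy_eq_of_mem_shortElements (hg : g ∈ shortElements Γ ε x)
    (hh : h ∈ shortElements Γ ε x) :
    fixedBy (GromovBoundary hX o) g = fixedBy (GromovBoundary hX o) h :=
  ((escapes_of_mem_shortElements hΓ hg o).hasRigidFixedSet hX).fixedBy_eq_of_isVirtuallyNilpotent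
    ((escapes_of_mem_shortElements hΓ hh o).hasRigidFixedSet hX)
    (hmarg x (max (dist x (g x)) (dist x (h x))) (dist_nonneg.trans (le_max_left _ _))
      (max_lt hg.2.2 hh.2.2))
    (Subgroup.subset_closure ⟨hg.1, le_max_left _ _⟩)
    (Subgroup.subset_closure ⟨hh.1, le_max_right _ _⟩)

theorem fixedBy_eq_of_forall_nonempty_shortElements [PreconnectedSpace X]
    (hshort : ∀ z, (shortElements Γ ε z).Nonempty)
    (hg : g ∈ shortElements Γ ε x) (hh : h ∈ shortElements Γ ε y) :
    fixedBy (GromovBoundary hX o) g = fixedBy (GromovBoundary hX o) h := by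
  choose f hf using hshort
  have hconst : IsLocallyConstant fun z => fixedBy (GromovBoundary hX o) (f z) :=
    (IsLocallyConstant.iff_eventually_eq _).2 fun z =>
      (eventually_mem_shortElements (hf z)).mono fun w hw =>
        fixedBy_eq_of_mem_shortElements hX hΓ hmarg (hf w) hw
  calc fixedBy (GromovBoundary hX o) g = fixedBy (GromovBoundary hX o) (f x) :=
        fixedBy_eq_of_mem_shortElements hX hΓ hmarg hg (hf x)
    _ = fixedBy (GromovBoundary hX o) (f y) := hconst.apply_eq_of_preconnectedSpace x y
    _ = fixedBy (GromovBoundary hX o) h := fixedBy_eq_of_mem_shortElements hX hΓ hmarg (hf y) hh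

theorem smul_fixedBy_eq_of_forall_nonempty_shortElements [PreconnectedSpace X]
    (hshort : ∀ z, (shortElements Γ ε z).Nonempty) (hg : g ∈ shortElements Γ ε x) (hu : u ∈ Γ) :
    u • fixedBy (GromovBoundary hX o) g = fixedBy (GromovBoundary hX o) g := by
  rw [smul_fixedBy]
  exact fixedBy_eq_of_forall_nonempty_shortElements hX hΓ hmarg hshort
    (conj_mem_shortElements hg hu) hg

end ShortElements

section FreeDiastole

open MulAction
open scoped Pointwise

theorem free_diastole_lower_bound_general {X : Type*} [MetricSpace X] {δ ε : ℝ}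
    (hX : IsDeltaHyperbolic X δ) (hlines : HasGeodesicLines X) {Γ : Subgroup (X ≃ᵢ X)}
    (hΓ : IsDiscreteSubgroup Γ) (hne : ¬ IsVirtuallyNilpotent Γ)
    (hmarg : ∀ x r, 0 ≤ r → r < ε → IsVirtuallyNilpotent ↥(almostStabilizer Γ r x)) :
    ∃ x, ∀ g ∈ Γ, ¬ IsOfFinOrder g → ε ≤ dist x (g x) := by
  by_contra! hshort
  have := hlines.preconnectedSpace
  obtain ⟨o⟩ : Nonempty X := not_isEmpty_iff.1 fun _ => hne (.of_isEmpty Γ)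
  obtain ⟨g, hg⟩ := hshort o
  have hesc := escapes_of_mem_shortElements hΓ hg o
  have hinv : ∀ u ∈ Γ,
      u • fixedBy (GromovBoundary hX o) g = fixedBy (GromovBoundary hX o) g := fun _ hu =>
    smul_fixedBy_eq_of_forall_nonempty_shortElements hX hΓ hmarg hshort hg hu
  by_cases hends : hesc.limitPoint hX = hesc.inv.limitPoint hX
  · have hfix : fixedBy (GromovBoundary hX o) g = {hesc.limitPoint hX} := by
      rw [hesc.fixedBy_eq hX, ← hends, Set.pair_eq_singleton]
    simp only [hfix, Set.smul_set_singleton, Set.singleton_eq_singleton_iff] at hinv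
    obtain ⟨p, hp⟩ := hlines.exists_forall_le_dist hΓ hinv ε
    obtain ⟨h, hh⟩ := hshort p
    refine (hp h hh.1 ?_).not_gt hh.2.2
    rw [fixedBy_eq_of_forall_nonempty_shortElements hX hΓ hmarg hshort hh hg, hfix]
  · obtain ⟨C, hC⟩ := hesc.exists_dist_zpow_le_of_smul_fixedBy_eq hX hends
    exact hne (isVirtuallyNilpotent_of_forall_exists_dist_zpow_le hΓ hg.1
      fun u hu => hC u (hinv u hu))

end FreeDiastole

/-- **Corollary 6.5**: lower bound for the free diastole. For every `0 < r ≤ ε₀` there is a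
point displaced at least `r` by every infinite-order element of `Γ`; in particular
`dias⁰(Γ,X) = sup_x sys⁰(Γ,x) ≥ ε₀`. The hypothesis `hmarg` states that
`nilrad(Γ,x) ≥ ε₀` for every `x ∈ X`. -/
theorem free_diastole_lower_bound
    (P₀ r₀ δ ε₀ : ℝ) (hP₀ : 0 < P₀) (hr₀ : 0 < r₀) (hδ : 0 < δ) (hε₀ : 0 < ε₀)
    (X : Type*) [MetricSpace X] [CompleteSpace X] (σ : X → X → ℝ → X)
    (hGCB : IsGCB σ) (hhyp : IsDeltaHyperbolic X δ) (hpack : IsPacked X P₀ r₀)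
    (Γ : Subgroup (X ≃ᵢ X)) (hσΓ : ∀ g ∈ Γ, IsSigmaIsometry σ g)
    (hdisc : IsDiscreteSubgroup Γ) (hne : IsNonElementary Γ)
    (hmarg : ∀ x : X, ∀ r : ℝ, 0 ≤ r → r < ε₀ →
      IsVirtuallyNilpotent ↥(almostStabilizer Γ r x)) :
    ∀ r : ℝ, 0 < r → r ≤ ε₀ →
      ∃ x : X, ∀ g ∈ Γ, ¬ IsOfFinOrder g → r ≤ dist x (g x) := by
  intro r _ hrε
  obtain ⟨x, hx⟩ := free_diastole_lower_bound_general hhyp hGCB.hasGeodesicLines hdisc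
    hne.not_isVirtuallyNilpotent hmarg
  exact ⟨x, fun g hg hinf => hrε.trans (hx g hg hinf)⟩
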